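/- For all t > 0 and x ∈ ℝ, ∫_{C_W} w(1)² exp(−t ∫₀¹ (x + √(2t) w(s))² ds) dm_W(w) = (1/(2t)) · ((1 − cosh(2t))² x²/cosh(2t)² + sinh(2t)/cosh(2t)) · k(t,x), where k(t,x) = cosh(2t)^{−1/2} exp(−(1/2)(sinh(2t)/cosh(2t)) x²). -/

import Mathlib

/-! With `X = x + √(2t) w`, the integral is `1/(2t)` times the harmonic oscillator semigroup
at time `2t` applied to `y ↦ (y - x)²`. It is computed by a discretization that is exact at every
level `n`.

Replace `t ∫ X²` by a trapezoidal sum on the grid `j / n`. The discretized integral is an `n`-fold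
iteration of the kernel `fkK`: a Gaussian step damped by the potential at both of its endpoints.
Choosing `θ` with `sinh θ = 2t / n` and the weight `tanh (θ / 2) = sinh θ / (1 + cosh θ)` in place
of `t / n` turns this kernel into the Mehler kernel

`(2π sinh θ)^(-1/2) exp (-(X - Y)² / (2 sinh θ) - tanh (θ / 2) (X² + Y²) / 2)`,

so that one step sends the explicit function `oscV x T` to `oscV x (T + θ)`
(`lintegral_fkK_oscV`, which is completion of the square, two Gaussian moments and the addition
formulas for `sinh` and `cosh`). Iterating (`lintegral_chain`) and inserting the finite-dimensional
distributions of the Wiener measure gives the discretized integral as `oscV x (n θ) x`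
(`IsWienerMeasure.lintegral_trapezoid`).

As `n → ∞`, `n θ → 2t` and `n tanh (θ / 2) → t`, the trapezoidal sums converge along every
continuous path, and `w(1)²` is an integrable dominating function, so dominated convergence gives
the formula. -/

open MeasureTheory Real Filter Topology

noncomputable section


/-- The classical Wiener space: continuous functions on `[0,1]` vanishing at `0`. -/
def CW : Type := {w : C(Set.Icc (0:ℝ) 1, ℝ) // w ⟨0, by norm_num⟩ = 0}

instance : TopologicalSpace CW := by unfold CW; infer_instance
instance : MeasurableSpace CW := borel CW

/-- Evaluation of an element of the Wiener space at a time `s` (clamped to `[0,1]`). -/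
def CW.eval (w : CW) (s : ℝ) : ℝ := w.1 (Set.projIcc (0:ℝ) 1 zero_le_one s)

/-- The value preceding index `i`, with the convention that it is `0` for `i = 0`. -/
def prevVal {n : ℕ} (v : Fin n → ℝ) (i : Fin n) : ℝ :=
  if h : (i : ℕ) = 0 then 0 else v ⟨(i : ℕ) - 1, by have := i.isLt; omega⟩

/-- The normal (Gaussian) density of the finite-dimensional distributions of Brownian
motion at times `t 0 < t 1 < ⋯ < t (n-1)`. -/
def normalDensity {n : ℕ} (t : Fin n → ℝ) (ξ : Fin n → ℝ) : ℝ :=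
  (Real.sqrt ((2 * π) ^ n * ∏ i, (t i - prevVal t i)))⁻¹ *
    Real.exp (-(1 / 2) * ∑ i, (ξ i - prevVal ξ i) ^ 2 / (t i - prevVal t i))

/-- `μ` is the Wiener measure: a probability measure on `CW` whose finite-dimensional
distributions at times `0 < t 0 < t 1 < ⋯ < t (n-1) ≤ 1` have the normal density. -/
structure IsWienerMeasure (μ : Measure CW) : Prop where
  prob : IsProbabilityMeasure μ
  fdd : ∀ (n : ℕ) (t : Fin n → ℝ), StrictMono t → (∀ i, 0 < t i) → (∀ i, t i ≤ 1) →
    Measure.map (fun (w : CW) (i : Fin n) => w.eval (t i)) μ =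
      MeasureTheory.volume.withDensity (fun ξ => ENNReal.ofReal (normalDensity t ξ))

/-- The Feynman–Kac type integral of the paper:
`S(v₀,c)(t,x) = ∫_{C_W} v₀(√(2t) w(1)+x) exp(−t∫₀¹ (x+√(2t)w(s))² ds)
  exp(−t∫₀¹ c(t(1−s), √(2t)w(s)+x) ds) dm_W(w)`. -/
def wienerFK (μ : Measure CW) (v₀ : ℝ → ℝ) (c : ℝ → ℝ → ℝ) (t x : ℝ) : ℝ :=
  ∫ w : CW,
    v₀ (Real.sqrt (2 * t) * w.eval 1 + x) *
      Real.exp (-(t * ∫ s in (0:ℝ)..1, (x + Real.sqrt (2 * t) * w.eval s) ^ 2)) *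
      Real.exp (-(t * ∫ s in (0:ℝ)..1,
        c (t * (1 - s)) (Real.sqrt (2 * t) * w.eval s + x))) ∂μ

/-! ### Iterated kernels -/

/-- Iterating a kernel: if `V (k + 1)` is obtained from `V k` by integrating against `K`, then
integrating `V 0` of the endpoint against the product of `K` along all `n`-step paths starting at
`z` gives `V n z`. The path is `Fin.cons z ξ`, and the first coordinate is split off by Tonelli. -/
lemma lintegral_chain (K : ℝ → ℝ → ENNReal) (hK : Measurable (Function.uncurry K))
    (V : ℕ → ℝ → ENNReal) (hV : Measurable (V 0))
    (hstep : ∀ k z, ∫⁻ y, K z y * V k y = V (k + 1) z) (n : ℕ) (z : ℝ) :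
    ∫⁻ ξ : Fin n → ℝ,
      (∏ i : Fin n, K ((Fin.cons z ξ : Fin (n + 1) → ℝ) i.castSucc)
        ((Fin.cons z ξ : Fin (n + 1) → ℝ) i.succ)) *
        V 0 ((Fin.cons z ξ : Fin (n + 1) → ℝ) (Fin.last n)) = V n z := by
  induction n generalizing z with
  | zero => simp [volume_pi]
  | succ n ih =>
    have hcons : ∀ j : Fin (n + 1), Measurable
        (fun q : ℝ × (Fin n → ℝ) => (Fin.cons q.1 q.2 : Fin (n + 1) → ℝ) j) := by
      intro j
      refine Fin.cases ?_ (fun j => ?_) j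
      · simpa using measurable_fst
      · simpa using (measurable_snd.eval : Measurable fun q : ℝ × (Fin n → ℝ) => q.2 j)
    have hG : Measurable (fun q : ℝ × (Fin n → ℝ) => K z q.1 *
        ((∏ i : Fin n, K ((Fin.cons q.1 q.2 : Fin (n + 1) → ℝ) i.castSucc)
          ((Fin.cons q.1 q.2 : Fin (n + 1) → ℝ) i.succ)) *
        V 0 ((Fin.cons q.1 q.2 : Fin (n + 1) → ℝ) (Fin.last n)))) := by
      refine Measurable.mul (hK.comp (measurable_const.prodMk measurable_fst))
        (Measurable.mul (Finset.measurable_prod _ fun i _ => ?_) (hV.comp (hcons _)))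
      exact hK.comp ((hcons i.castSucc).prodMk (hcons i.succ))
    have key := (volume_preserving_piFinSuccAbove (fun _ : Fin (n + 1) => ℝ) 0).lintegral_comp hG
    rw [← hstep n z]
    have h2 : ∀ y, K z y * V n y = ∫⁻ ξ : Fin n → ℝ, K z y *
        ((∏ i : Fin n, K ((Fin.cons y ξ : Fin (n + 1) → ℝ) i.castSucc)
          ((Fin.cons y ξ : Fin (n + 1) → ℝ) i.succ)) *
        V 0 ((Fin.cons y ξ : Fin (n + 1) → ℝ) (Fin.last n))) := by
      intro y
      rw [lintegral_const_mul, ih y]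
      exact (Measurable.mul (Finset.measurable_prod _ fun i _ =>
        hK.comp (((hcons i.castSucc).comp (measurable_prodMk_left (x := y))).prodMk
          ((hcons i.succ).comp (measurable_prodMk_left (x := y)))))
        (hV.comp ((hcons _).comp measurable_prodMk_left)))
    simp_rw [h2]
    rw [Measure.volume_eq_prod, lintegral_prod _ hG.aemeasurable] at key
    rw [← key]
    refine lintegral_congr fun ξ => ?_
    have hξ : (Fin.cons (ξ 0) (fun j : Fin n => ξ j.succ) : Fin (n + 1) → ℝ) = ξ :=
      Fin.cons_self_tail ξ
    have h3 : (MeasurableEquiv.piFinSuccAbove (fun _ : Fin (n + 1) => ℝ) 0) ξ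
        = (ξ 0, fun j : Fin n => ξ j.succ) := by
      ext <;> simp [MeasurableEquiv.piFinSuccAbove, Fin.insertNthEquiv, Fin.tail]
    rw [h3]
    simp only [hξ]
    rw [Fin.prod_univ_succ, mul_assoc]
    simp [← Fin.succ_last]

/-! ### Gaussian expectations of quadratics -/

open ProbabilityTheory in
lemma lintegral_quadratic_gaussian {v : NNReal} (m p q r : ℝ) (hr : 0 ≤ r) :
    ∫⁻ y, ENNReal.ofReal ((p * (y - m) + q) ^ 2 + r) ∂(gaussianReal m v) =
      ENNReal.ofReal (p ^ 2 * v + q ^ 2 + r) := by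
  have hL2 : MemLp (fun y : ℝ => y - m) 2 (gaussianReal m v) :=
    (memLp_id_gaussianReal (μ := m) (v := v) 2).sub (memLp_const m)
  have h1 : Integrable (fun y : ℝ => y - m) (gaussianReal m v) := hL2.integrable (by norm_num)
  have h2 : Integrable (fun y : ℝ => (y - m) ^ 2) (gaussianReal m v) := hL2.integrable_sq
  have e1 : ∫ y, (y - m) ∂(gaussianReal m v) = 0 := by
    have hid : Integrable (fun y : ℝ => y) (gaussianReal m v) :=
      (memLp_id_gaussianReal (μ := m) (v := v) 1).integrable le_rfl
    rw [integral_sub hid (integrable_const _)]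
    simp [integral_id_gaussianReal]
  have e2 : ∫ y, (y - m) ^ 2 ∂(gaussianReal m v) = v := by
    have := variance_fun_id_gaussianReal (μ := m) (v := v)
    rw [variance_eq_integral (by fun_prop)] at this
    simpa [integral_id_gaussianReal] using this
  have hexp : ∀ y : ℝ, (p * (y - m) + q) ^ 2 + r
      = p ^ 2 * (y - m) ^ 2 + 2 * p * q * (y - m) + (q ^ 2 + r) := fun y => by ring
  have hint : Integrable (fun y => (p * (y - m) + q) ^ 2 + r) (gaussianReal m v) := by
    simp_rw [hexp]
    exact ((h2.const_mul _).add (h1.const_mul _)).add (integrable_const _)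
  rw [← ofReal_integral_eq_lintegral_ofReal hint (ae_of_all _ fun y => by positivity)]
  congr 1
  simp_rw [hexp]
  have h12 : Integrable (fun y => p ^ 2 * (y - m) ^ 2 + 2 * p * q * (y - m)) (gaussianReal m v) :=
    (h2.const_mul _).add (h1.const_mul _)
  rw [integral_add h12 (integrable_const _), integral_add (h2.const_mul _) (h1.const_mul _),
    integral_const_mul, integral_const_mul, e1, e2]
  simp
  ring

open ProbabilityTheory in
/-- The Gaussian expectation of a quadratic, with the density written out, in the form in which
the one-step oscillator identity produces it. -/
lemma lintegral_quadratic_gaussianPDF {v : ℝ} (hv : 0 < v) (m p q r Z : ℝ) (hr : 0 ≤ r)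
    (hZ : 0 ≤ Z) :
    ∫⁻ y, ENNReal.ofReal ((√(2 * π * v))⁻¹ * rexp (-(y - m) ^ 2 / (2 * v)) *
        (Z * ((p * (y - m) + q) ^ 2 + r))) =
      ENNReal.ofReal (Z * (p ^ 2 * v + q ^ 2 + r)) := by
  lift v to NNReal using hv.le
  have hv' : v ≠ 0 := by
    rintro rfl
    simp at hv
  have h := lintegral_quadratic_gaussian (v := v) m p q r hr
  rw [gaussianReal_of_var_ne_zero _ hv', lintegral_withDensity_eq_lintegral_mul _
    (measurable_gaussianPDF _ _) (by fun_prop)] at h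
  rw [ENNReal.ofReal_mul hZ]
  have h' : ENNReal.ofReal (p ^ 2 * v + q ^ 2 + r) = _ := h.symm
  rw [h', ← lintegral_const_mul _ (by fun_prop)]
  refine lintegral_congr fun y => ?_
  simp only [Pi.mul_apply, gaussianPDF, gaussianPDFReal]
  rw [← ENNReal.ofReal_mul (by positivity), ← ENNReal.ofReal_mul hZ]
  congr 1
  ring

/-! ### The one-step oscillator identity -/

/-- The Gaussian transition density of Brownian motion over a time step `δ`. -/
def heatK (δ z y : ℝ) : ℝ := (√(2 * π * δ))⁻¹ * rexp (-(y - z) ^ 2 / (2 * δ))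

/-- The one-step Feynman–Kac kernel: the Brownian transition density damped by the potential
`κ X² / 2` at both endpoints, where `X = x + σ w`. -/
def fkK (σ x κ δ z y : ℝ) : ℝ :=
  heatK δ z y * rexp (-(κ / 2 * ((x + σ * z) ^ 2 + (x + σ * y) ^ 2)))

/-- The value at the point `X` and time `T` of the harmonic oscillator semigroup applied to the
function `y ↦ (y - x)²`. -/
def oscV (x T X : ℝ) : ℝ :=
  (√(cosh T))⁻¹ * rexp (-(1 / 2) * (sinh T / cosh T) * X ^ 2) *
    ((X / cosh T - x) ^ 2 + sinh T / cosh T)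

lemma heatK_nonneg (δ z y : ℝ) : 0 ≤ heatK δ z y := by unfold heatK; positivity

lemma fkK_nonneg (σ x κ δ z y : ℝ) : 0 ≤ fkK σ x κ δ z y :=
  mul_nonneg (heatK_nonneg _ _ _) (exp_pos _).le

/-- Completing the square in the oscillator step. Here `S, C` are `sinh θ, cosh θ` and `s, c` are
`sinh T, cosh T`; the potential weight `S / (1 + C) = tanh (θ / 2)` and the step variance `S`
(in the variable `X = x + σ w`) are those for which the addition formulas make the result exact. -/
lemma osc_exponent {σ x S C s c z y : ℝ} (hσ : σ ≠ 0) (hS : S ≠ 0) (hc : c ≠ 0)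
    (hC1 : 1 + C ≠ 0) (hD : c * C + s * S ≠ 0) (hSC : C ^ 2 = S ^ 2 + 1) :
    -(y - z) ^ 2 / (2 * (S / σ ^ 2)) +
        -((S / (1 + C)) / 2 * ((x + σ * z) ^ 2 + (x + σ * y) ^ 2)) +
        -(1 / 2) * (s / c) * (x + σ * y) ^ 2 =
      -(y - ((x + σ * z) * c / (c * C + s * S) - x) / σ) ^ 2 /
          (2 * (S * c / (σ ^ 2 * (c * C + s * S)))) +
        -(1 / 2) * ((s * C + c * S) / (c * C + s * S)) * (x + σ * z) ^ 2 := by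
  obtain ⟨Z, hZ⟩ : ∃ Z, Z = x + σ * z := ⟨_, rfl⟩
  obtain ⟨Y, hY⟩ : ∃ Y, Y = x + σ * y := ⟨_, rfl⟩
  have hz : z = (Z - x) / σ := by rw [hZ]; field_simp; ring
  have hy : y = (Y - x) / σ := by rw [hY]; field_simp; ring
  have hκ : S / (1 + C) = (C - 1) / S := by
    rw [div_eq_div_iff hC1 hS]; linear_combination -hSC
  rw [← hZ, ← hY, hκ, hz, hy]
  have e1 : ((Y - x) / σ - (Z - x) / σ) = (Y - Z) / σ := by field_simp; ring
  have e2 : (Y - x) / σ - (Z * c / (c * C + s * S) - x) / σ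
      = (Y - Z * c / (c * C + s * S)) / σ := by field_simp; ring
  rw [e1, e2]
  generalize hDe : c * C + s * S = D at *
  have hE : (s * C + c * S) = (D * C - c) / S := by
    rw [eq_div_iff hS, ← hDe]; linear_combination (-c) * hSC
  have hs : s = (D - c * C) / S := by rw [eq_div_iff hS, ← hDe]; ring
  rw [hE, hs]
  field_simp
  ring

/-- With time step `sinh θ / σ²` and weight `tanh (θ / 2)`, the one-step kernel is exactly
the oscillator semigroup at time `θ` (the Mehler kernel), so it advances `oscV` from `T` to
`T + θ`. -/
lemma lintegral_fkK_oscV {σ : ℝ} (hσ : 0 < σ) (x : ℝ) {θ : ℝ} (hθ : 0 < θ) {T : ℝ} (hT : 0 ≤ T)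
    (z : ℝ) :
    ∫⁻ y, ENNReal.ofReal (fkK σ x (sinh θ / (1 + cosh θ)) (sinh θ / σ ^ 2) z y) *
        ENNReal.ofReal (oscV x T (x + σ * y)) =
      ENNReal.ofReal (oscV x (T + θ) (x + σ * z)) := by
  have hS : 0 < sinh θ := sinh_pos_iff.2 hθ
  have hs : 0 ≤ sinh T := sinh_nonneg_iff.2 hT
  have hC := cosh_pos θ
  have hc := cosh_pos T
  have hD := cosh_pos (T + θ)
  have hE : 0 ≤ sinh (T + θ) := sinh_nonneg_iff.2 (by linarith)
  have hSC := cosh_sq θ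
  have hsc := cosh_sq T
  have hv : 0 < sinh θ * cosh T / (σ ^ 2 * cosh (T + θ)) := by positivity
  have key := lintegral_quadratic_gaussianPDF hv
    (((x + σ * z) * cosh T / cosh (T + θ) - x) / σ) (σ / cosh T)
    ((x + σ * z) / cosh (T + θ) - x) (sinh T / cosh T)
    ((√(cosh (T + θ)))⁻¹ * rexp (-(1 / 2) * (sinh (T + θ) / cosh (T + θ)) * (x + σ * z) ^ 2))
    (by positivity) (by positivity)
  have hvar : (σ / cosh T) ^ 2 * (sinh θ * cosh T / (σ ^ 2 * cosh (T + θ)))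
      + ((x + σ * z) / cosh (T + θ) - x) ^ 2 + sinh T / cosh T
      = ((x + σ * z) / cosh (T + θ) - x) ^ 2 + sinh (T + θ) / cosh (T + θ) := by
    have : (σ / cosh T) ^ 2 * (sinh θ * cosh T / (σ ^ 2 * cosh (T + θ))) + sinh T / cosh T
        = sinh (T + θ) / cosh (T + θ) := by
      field_simp
      rw [cosh_add, sinh_add]
      linear_combination (-sinh θ) * hsc
    linear_combination this
  rw [hvar] at key
  unfold oscV
  rw [← key]
  refine lintegral_congr fun y => ?_
  rw [← ENNReal.ofReal_mul (fkK_nonneg _ _ _ _ _ _)]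
  congr 1
  unfold fkK heatK
  have hexp := osc_exponent (σ := σ) (x := x) (z := z) (y := y) hσ.ne' hS.ne' hc.ne'
    (by positivity) (by rw [← cosh_add]; exact hD.ne') hSC
  rw [← cosh_add, ← sinh_add] at hexp
  -- the centre of the Gaussian matches the quadratic factor
  have hlin : σ / cosh T * (y - ((x + σ * z) * cosh T / cosh (T + θ) - x) / σ) +
      ((x + σ * z) / cosh (T + θ) - x) = (x + σ * y) / cosh T - x := by
    field_simp
    ring
  have hroot : (√(2 * π * (sinh θ / σ ^ 2)))⁻¹ * (√(cosh T))⁻¹ =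
      (√(2 * π * (sinh θ * cosh T / (σ ^ 2 * cosh (T + θ)))))⁻¹ * (√(cosh (T + θ)))⁻¹ := by
    rw [← mul_inv, ← mul_inv, ← sqrt_mul (by positivity), ← sqrt_mul (by positivity)]
    congr 2
    field_simp
  rw [hlin]
  have := congrArg rexp hexp
  rw [exp_add, exp_add, exp_add] at this
  calc _ = ((√(2 * π * (sinh θ / σ ^ 2)))⁻¹ * (√(cosh T))⁻¹) *
        (rexp (-(y - z) ^ 2 / (2 * (sinh θ / σ ^ 2))) *
          rexp (-(sinh θ / (1 + cosh θ) / 2 * ((x + σ * z) ^ 2 + (x + σ * y) ^ 2))) *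
          rexp (-(1 / 2) * (sinh T / cosh T) * (x + σ * y) ^ 2)) *
        (((x + σ * y) / cosh T - x) ^ 2 + sinh T / cosh T) := by ring
    _ = _ := by rw [hroot, this]; ring

/-! ### Wiener measure on a uniform grid -/

lemma prevVal_eq_cons {n : ℕ} (ξ : Fin n → ℝ) (i : Fin n) :
    prevVal ξ i = (Fin.cons 0 ξ : Fin (n + 1) → ℝ) i.castSucc := by
  cases n with
  | zero => exact i.elim0
  | succ n =>
    refine Fin.cases ?_ (fun j => ?_) i
    · simp [prevVal]
    · rw [← Fin.succ_castSucc]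
      simp only [prevVal, Fin.val_succ, Fin.cons_succ]
      rw [dif_neg (by omega)]
      congr 1

lemma CW.continuous_eval (w : CW) : Continuous w.eval :=
  w.1.continuous.comp continuous_projIcc

lemma CW.eval_zero (w : CW) : w.eval 0 = 0 := by
  have h := w.2
  unfold CW.eval
  rw [Set.projIcc_left]
  exact h

lemma CW.measurable_eval (s : ℝ) : Measurable (fun w : CW => w.eval s) := by
  have hcont : Continuous (fun w : CW => w.eval s) :=
    (continuous_eval_const (F := C(Set.Icc (0:ℝ) 1, ℝ)) (Set.projIcc (0:ℝ) 1 zero_le_one s)).comp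
      (continuous_subtype_val (p := fun w : C(Set.Icc (0:ℝ) 1, ℝ) => w ⟨0, by norm_num⟩ = 0))
  have : BorelSpace CW := ⟨rfl⟩
  exact hcont.measurable

/-- Prepending the starting value `0` to the sampled values of `w` gives the values of `w` on the
grid `j / n`, `0 ≤ j ≤ n`. -/
lemma CW.cons_eval (w : CW) (n : ℕ) (j : Fin (n + 1)) :
    (Fin.cons 0 (fun i : Fin n => w.eval (((i : ℕ) + 1 : ℝ) / n)) : Fin (n + 1) → ℝ) j =
      w.eval ((j : ℕ) / n) := by
  refine Fin.cases ?_ (fun i => ?_) j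
  · simp [CW.eval_zero]
  · simp

lemma normalDensity_eq_prod {n : ℕ} (hn : n ≠ 0) (ξ : Fin n → ℝ) :
    normalDensity (fun i : Fin n => ((i : ℕ) + 1 : ℝ) / n) ξ =
      ∏ i : Fin n, heatK (1 / n) ((Fin.cons 0 ξ : Fin (n + 1) → ℝ) i.castSucc)
        ((Fin.cons 0 ξ : Fin (n + 1) → ℝ) i.succ) := by
  have hn' : (n : ℝ) ≠ 0 := by exact_mod_cast hn
  have hstep : ∀ i : Fin n, ((i : ℕ) + 1 : ℝ) / n -
      prevVal (fun i : Fin n => ((i : ℕ) + 1 : ℝ) / n) i = 1 / n := by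
    intro i
    unfold prevVal
    split_ifs with h
    · simp [h]
    · simp only
      rw [Nat.cast_sub (by omega)]
      field_simp
      push_cast
      ring
  unfold normalDensity heatK
  simp only [hstep, Fin.cons_succ, ← prevVal_eq_cons]
  rw [Finset.prod_mul_distrib, ← exp_sum]
  congr 1
  · simp only [Finset.prod_const, Finset.card_univ, Fintype.card_fin]
    rw [← mul_pow, inv_pow]
    congr 1
    rw [sqrt_eq_iff_eq_sq (by positivity) (by positivity), ← pow_mul, mul_comm n 2, pow_mul,
      sq_sqrt (by positivity)]
  · congr 1
    rw [Finset.mul_sum]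
    refine Finset.sum_congr rfl fun i _ => ?_
    field_simp

/-- The finite-dimensional distribution on the uniform grid, as a product of transition
densities. -/
lemma IsWienerMeasure.lintegral_path {μ : Measure CW} (hμ : IsWienerMeasure μ) {n : ℕ}
    (hn : n ≠ 0) {G : (Fin n → ℝ) → ENNReal} (hG : Measurable G) :
    ∫⁻ w : CW, G (fun i : Fin n => w.eval (((i : ℕ) + 1 : ℝ) / n)) ∂μ =
      ∫⁻ ξ : Fin n → ℝ, (∏ i : Fin n, ENNReal.ofReal (heatK (1 / n)
        ((Fin.cons 0 ξ : Fin (n + 1) → ℝ) i.castSucc)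
        ((Fin.cons 0 ξ : Fin (n + 1) → ℝ) i.succ))) * G ξ := by
  have hn' : (0 : ℝ) < n := by exact_mod_cast Nat.pos_of_ne_zero hn
  have hmeas : Measurable (fun (w : CW) (i : Fin n) => w.eval (((i : ℕ) + 1 : ℝ) / n)) :=
    measurable_pi_lambda _ fun i => CW.measurable_eval _
  have hmap := hμ.fdd n (fun i : Fin n => ((i : ℕ) + 1 : ℝ) / n)
    (fun i j hij => by
      have : (i : ℝ) < (j : ℝ) := by exact_mod_cast hij
      simp only
      gcongr)
    (fun i => by positivity)
    (fun i => by
      rw [div_le_one hn']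
      exact_mod_cast i.isLt)
  have hcons : ∀ j : Fin (n + 1), Measurable
      (fun ξ : Fin n → ℝ => (Fin.cons 0 ξ : Fin (n + 1) → ℝ) j) := by
    intro j
    refine Fin.cases ?_ (fun j => ?_) j
    · simp
    · simpa using measurable_pi_apply j
  have hdens : Measurable (fun ξ : Fin n → ℝ =>
      ENNReal.ofReal (normalDensity (fun i : Fin n => ((i : ℕ) + 1 : ℝ) / n) ξ)) := by
    simp_rw [normalDensity_eq_prod hn]
    refine (Finset.measurable_prod _ fun i _ => ?_).ennreal_ofReal
    have h1 := hcons i.castSucc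
    have h2 := hcons i.succ
    unfold heatK
    fun_prop
  rw [← lintegral_map hG hmeas, hmap, lintegral_withDensity_eq_lintegral_mul _ hdens hG]
  refine lintegral_congr fun ξ => ?_
  simp only [Pi.mul_apply]
  rw [normalDensity_eq_prod hn, ENNReal.ofReal_prod_of_nonneg fun i _ => heatK_nonneg _ _ _]

/-- The dominating function of the limit argument is integrable. -/
lemma IsWienerMeasure.integrable_eval_one_sq {μ : Measure CW} (hμ : IsWienerMeasure μ) :
    Integrable (fun w : CW => w.eval 1 ^ 2) μ := by
  have h := hμ.lintegral_path one_ne_zero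
    (G := fun ξ : Fin 1 → ℝ => ENNReal.ofReal (ξ 0 ^ 2)) (by fun_prop)
  have hc := lintegral_chain (fun z y => ENNReal.ofReal (heatK 1 z y))
    (by unfold heatK Function.uncurry; fun_prop)
    (fun k z => ENNReal.ofReal (z ^ 2 + k)) (by fun_prop)
    (fun k z => by
      have := lintegral_quadratic_gaussianPDF one_pos z 1 z k 1 (by positivity) zero_le_one
      rw [show z ^ 2 + ((k + 1 : ℕ) : ℝ) = 1 * (1 ^ 2 * 1 + z ^ 2 + k) by push_cast; ring, ← this]
      refine lintegral_congr fun y => ?_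
      rw [← ENNReal.ofReal_mul (heatK_nonneg _ _ _)]
      congr 1
      unfold heatK
      ring) 1 0
  refine ⟨((CW.measurable_eval 1).pow_const 2).aestronglyMeasurable, ?_⟩
  rw [hasFiniteIntegral_iff_ofReal (ae_of_all _ fun w => by positivity)]
  simp only [Nat.cast_one, Fin.isValue, Fin.val_zero, Nat.cast_zero, zero_add, div_one] at h
  have e : ∫⁻ w : CW, ENNReal.ofReal (w.eval 1 ^ 2) ∂μ = ENNReal.ofReal (0 ^ 2 + (1 : ℕ)) := by
    rw [h, ← hc]
    refine lintegral_congr fun ξ => ?_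
    simp [← Fin.succ_last]
  rw [e]
  exact ENNReal.ofReal_lt_top

/-- Exact evaluation of the discretized Wiener integral: the trapezoidal potential with weight
`tanh (θ / 2)`, where `sinh θ = σ² / n`, gives the oscillator semigroup at time `n θ`. -/
lemma IsWienerMeasure.lintegral_trapezoid {μ : Measure CW} (hμ : IsWienerMeasure μ) {n : ℕ}
    (hn : n ≠ 0) {σ : ℝ} (hσ : 0 < σ) (x : ℝ) {θ : ℝ} (hθ : 0 < θ) (hS : sinh θ = σ ^ 2 / n) :
    ∫⁻ w : CW, ENNReal.ofReal ((σ * w.eval 1) ^ 2 *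
        rexp (-(sinh θ / (1 + cosh θ) / 2 * ∑ i ∈ Finset.range n,
          ((x + σ * w.eval ((i : ℝ) / n)) ^ 2 + (x + σ * w.eval (((i : ℝ) + 1) / n)) ^ 2)))) ∂μ =
      ENNReal.ofReal (oscV x (n * θ) x) := by
  have hn' : (0 : ℝ) < n := by exact_mod_cast Nat.pos_of_ne_zero hn
  have hδ : sinh θ / σ ^ 2 = 1 / n := by rw [hS]; field_simp
  set κ := sinh θ / (1 + cosh θ) with hκ
  have hc := lintegral_chain (fun z y => ENNReal.ofReal (fkK σ x κ (1 / n) z y))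
    (by unfold fkK heatK Function.uncurry; fun_prop)
    (fun k z => ENNReal.ofReal (oscV x (k * θ) (x + σ * z)))
    (by unfold oscV; fun_prop)
    (fun k z => by
      have := lintegral_fkK_oscV hσ x hθ (T := k * θ) (by positivity) z
      rw [hδ] at this
      rw [this]
      congr 2
      push_cast
      ring) n 0
  have hcons : ∀ j : Fin (n + 1), Measurable
      (fun ξ : Fin n → ℝ => (Fin.cons 0 ξ : Fin (n + 1) → ℝ) j) := by
    intro j
    refine Fin.cases ?_ (fun j => ?_) j
    · simp
    · simpa using measurable_pi_apply j
  have h := hμ.lintegral_path hn (G := fun ξ : Fin n → ℝ => ENNReal.ofReal (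
      (σ * (Fin.cons 0 ξ : Fin (n + 1) → ℝ) (Fin.last n)) ^ 2 *
        rexp (-(κ / 2 * ∑ i : Fin n,
          ((x + σ * (Fin.cons 0 ξ : Fin (n + 1) → ℝ) i.castSucc) ^ 2 +
            (x + σ * (Fin.cons 0 ξ : Fin (n + 1) → ℝ) i.succ) ^ 2)))))
    (by fun_prop)
  simp only [CW.cons_eval] at h
  simp only [Fin.val_last, Fin.val_castSucc, Fin.val_succ, div_self hn'.ne'] at h
  simp only [mul_zero, add_zero] at hc
  rw [← hc]
  simp only [Finset.sum_range]
  refine Eq.trans (by push_cast; rfl) (h.trans (lintegral_congr fun ξ => ?_))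
  rw [← ENNReal.ofReal_prod_of_nonneg fun i _ => heatK_nonneg _ _ _,
    ← ENNReal.ofReal_prod_of_nonneg fun i _ => fkK_nonneg _ _ _ _ _ _,
    ← ENNReal.ofReal_mul (Finset.prod_nonneg fun i _ => heatK_nonneg _ _ _),
    ← ENNReal.ofReal_mul (Finset.prod_nonneg fun i _ => fkK_nonneg _ _ _ _ _ _)]
  congr 1
  unfold fkK
  rw [Finset.prod_mul_distrib, ← exp_sum, Finset.mul_sum, ← Finset.sum_neg_distrib]
  simp [oscV]
  ring

/-! ### Passage to the limit -/

/-- The trapezoidal sums of a continuous function converge to its integral. -/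
lemma tendsto_trapezoid {f : ℝ → ℝ} (hf : Continuous f) :
    Tendsto (fun n : ℕ => 1 / (n : ℝ) * ∑ i ∈ Finset.range n,
      (f ((i : ℝ) / n) + f (((i : ℝ) + 1) / n)) / 2) atTop (𝓝 (∫ s in (0:ℝ)..1, f s)) := by
  rw [Metric.tendsto_atTop]
  intro ε hε
  have huc := isCompact_Icc.uniformContinuousOn_of_continuous (hf.continuousOn (s := Set.Icc 0 1))
  rw [Metric.uniformContinuousOn_iff] at huc
  obtain ⟨δ, hδ, hfδ⟩ := huc (ε / 2) (by positivity)
  obtain ⟨N, hN⟩ := exists_nat_gt (1 / δ)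
  refine ⟨N + 1, fun n hn => ?_⟩
  have hn0 : (0 : ℝ) < n := by exact_mod_cast (by omega : 0 < n)
  have hnδ : 1 / (n : ℝ) < δ := by
    rw [div_lt_comm₀ hn0 hδ]
    refine hN.trans ?_
    exact_mod_cast (by omega : N < n)
  have hsum := intervalIntegral.sum_integral_adjacent_intervals (f := f) (μ := volume)
    (a := fun k : ℕ => (k : ℝ) / n) (n := n) (fun k _ => hf.intervalIntegrable _ _)
  simp only [Nat.cast_zero, zero_div, div_self hn0.ne'] at hsum
  rw [dist_comm, dist_eq_norm, ← hsum, Finset.mul_sum, ← Finset.sum_sub_distrib]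
  have hterm : ∀ i ∈ Finset.range n,
      ‖(∫ s in ((i : ℕ) : ℝ) / n..((i + 1 : ℕ) : ℝ) / n, f s) -
        1 / (n : ℝ) * ((f ((i : ℝ) / n) + f (((i : ℝ) + 1) / n)) / 2)‖ ≤ ε / 2 * (1 / n) := by
    intro i hi
    have hin : ((i : ℝ) + 1) ≤ n := by exact_mod_cast Finset.mem_range.1 hi
    have hlen : (((i + 1 : ℕ) : ℝ) / n) - (i : ℝ) / n = 1 / n := by
      push_cast; field_simp; ring
    have hle : (i : ℝ) / n ≤ ((i + 1 : ℕ) : ℝ) / n := by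
      have : 0 < 1 / (n : ℝ) := by positivity
      linarith
    have hconst : 1 / (n : ℝ) * ((f ((i : ℝ) / n) + f (((i : ℝ) + 1) / n)) / 2) =
        ∫ _ in ((i : ℕ) : ℝ) / n..((i + 1 : ℕ) : ℝ) / n,
          (f ((i : ℝ) / n) + f (((i : ℝ) + 1) / n)) / 2 := by
      rw [intervalIntegral.integral_const, hlen, smul_eq_mul]
    -- both endpoint values are within `ε / 2` of `f s` on the cell
    rw [hconst, ← intervalIntegral.integral_sub (hf.intervalIntegrable _ _)
      intervalIntegrable_const]
    have hb := intervalIntegral.norm_integral_le_of_norm_le_const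
      (a := (i : ℝ) / n) (b := ((i + 1 : ℕ) : ℝ) / n) (C := ε / 2)
      (f := fun s => f s - (f ((i : ℝ) / n) + f (((i : ℝ) + 1) / n)) / 2) (fun s hs => ?_)
    · rwa [hlen, abs_of_pos (by positivity)] at hb
    rw [Set.uIoc_of_le hle] at hs
    have h0 : 0 ≤ (i : ℝ) / n := by positivity
    have h1 : ((i : ℝ) + 1) / n ≤ 1 := (div_le_one hn0).2 hin
    push_cast at hs hlen
    have ha := hfδ s ⟨by linarith [hs.1], by linarith [hs.2]⟩ ((i : ℝ) / n)
      ⟨h0, by linarith [hs.1, hs.2]⟩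
      (by rw [Real.dist_eq, abs_lt]; constructor <;> linarith [hs.1, hs.2])
    have hb := hfδ s ⟨by linarith [hs.1], by linarith [hs.2]⟩ (((i : ℝ) + 1) / n)
      ⟨by linarith [hs.1, hs.2], h1⟩
      (by rw [Real.dist_eq, abs_lt]; constructor <;> linarith [hs.1, hs.2])
    rw [Real.dist_eq, abs_lt] at ha hb
    rw [Real.norm_eq_abs, abs_le]
    constructor <;> linarith [ha.1, ha.2, hb.1, hb.2]
  calc _ ≤ ∑ i ∈ Finset.range n, ε / 2 * (1 / (n : ℝ)) := norm_sum_le_of_le _ hterm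
    _ = ε / 2 := by
      rw [Finset.sum_const, Finset.card_range, nsmul_eq_mul]
      field_simp
    _ < ε := by linarith

/-- The total oscillator time `n θ`, where `sinh θ = a / n`, tends to `a`. -/
lemma tendsto_mul_arsinh (a : ℝ) :
    Tendsto (fun n : ℕ => (n : ℝ) * arsinh (a / n)) atTop (𝓝 a) := by
  have hd : HasDerivAt (fun u : ℝ => arsinh (a * u)) a 0 := by
    have h1 : HasDerivAt (fun u : ℝ => a * u) a 0 := by
      simpa using (hasDerivAt_id (0 : ℝ)).const_mul a
    have h2 : HasDerivAt arsinh 1 (a * 0) := by simpa using hasDerivAt_arsinh 0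
    have h3 := h2.comp 0 h1
    rw [one_mul] at h3
    exact h3
  have h := (hd.tendsto_slope_zero_right).comp
    (tendsto_inv_atTop_nhdsGT_zero.comp (tendsto_natCast_atTop_atTop (R := ℝ)))
  refine h.congr fun n => ?_
  simp [div_eq_mul_inv]

/-- The total potential weight `n tanh (θ / 2)`, where `sinh θ = a / n`, tends to `a / 2`. -/
lemma tendsto_mul_potential (a : ℝ) :
    Tendsto (fun n : ℕ => (n : ℝ) * (sinh (arsinh (a / n)) / (1 + cosh (arsinh (a / n)))))
      atTop (𝓝 (a / 2)) := by
  have h0 : Tendsto (fun n : ℕ => a / (n : ℝ)) atTop (𝓝 0) := tendsto_const_div_atTop_nhds_zero_nat a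
  have hcont : Continuous (fun u : ℝ => a / (1 + cosh (arsinh u))) := by
    have h1 : Continuous (fun u : ℝ => 1 + cosh (arsinh u)) :=
      continuous_const.add (continuous_cosh.comp continuous_arsinh)
    refine continuous_const.div h1 fun u => ?_
    have := cosh_pos (arsinh u)
    positivity
  have h := (hcont.tendsto 0).comp h0
  rw [arsinh_zero, cosh_zero, one_add_one_eq_two] at h
  refine h.congr' ?_
  filter_upwards [eventually_gt_atTop 0] with n hn
  have hn' : (n : ℝ) ≠ 0 := by exact_mod_cast hn.ne'
  simp only [Function.comp, sinh_arsinh]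
  field_simp

/-- **Corollary (explicit Wiener integral, `v₀ = x²`).** For all `t > 0` and `x ∈ ℝ`,
`∫_{C_W} w(1)² exp(−t∫₀¹ (x+√(2t)w(s))² ds) dm_W(w)
  = (1/(2t)) ((1−cosh 2t)² x²/cosh²(2t) + tanh(2t)) k(t,x)`,
where `k(t,x) = cosh(2t)^{−1/2} exp(−(1/2) tanh(2t) x²)`. -/
theorem wiener_integral_w1_sq
    (μ : Measure CW) (hμ : IsWienerMeasure μ) :
    ∀ t > (0:ℝ), ∀ x : ℝ,
      (∫ w : CW, (w.eval 1) ^ 2 *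
        Real.exp (-(t * ∫ s in (0:ℝ)..1, (x + Real.sqrt (2 * t) * w.eval s) ^ 2)) ∂μ) =
      (1 / (2 * t)) *
        ((1 - Real.cosh (2 * t)) ^ 2 * x ^ 2 / Real.cosh (2 * t) ^ 2 +
          Real.sinh (2 * t) / Real.cosh (2 * t)) *
        ((Real.sqrt (Real.cosh (2 * t)))⁻¹ *
          Real.exp (-(1 / 2) * (Real.sinh (2 * t) / Real.cosh (2 * t)) * x ^ 2)) := by
  intro t ht x
  set σ := √(2 * t)
  have hσ : 0 < σ := sqrt_pos.2 (by positivity)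
  have hσ2 : σ ^ 2 = 2 * t := sq_sqrt (by positivity)
  let θ : ℕ → ℝ := fun n => arsinh (2 * t / n)
  let κ : ℕ → ℝ := fun n => sinh (θ n) / (1 + cosh (θ n))
  have hθ0 : ∀ n, 0 ≤ θ n := fun n => arsinh_nonneg_iff.2 (by positivity)
  have hκ0 : ∀ n, 0 ≤ κ n := fun n =>
    div_nonneg (sinh_nonneg_iff.2 (hθ0 n)) (by have := cosh_pos (θ n); positivity)
  let F : ℕ → CW → ℝ := fun n w => w.eval 1 ^ 2 *
    rexp (-(κ n / 2 * ∑ i ∈ Finset.range n,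
      ((x + σ * w.eval ((i : ℝ) / n)) ^ 2 + (x + σ * w.eval (((i : ℝ) + 1) / n)) ^ 2)))
  have hFmeas : ∀ n, Measurable (F n) := fun n => by
    have := CW.measurable_eval
    exact ((this 1).pow_const 2).mul (measurable_exp.comp ((Finset.measurable_sum _ fun i _ =>
      ((((this _).const_mul σ).const_add x).pow_const 2).add
        ((((this _).const_mul σ).const_add x).pow_const 2)).const_mul _).neg)
  -- replacing the potential by trapezoidal sums does not change the limit
  have hlim : Tendsto (fun n => ∫ w, F n w ∂μ) atTop (𝓝 (∫ w : CW, (w.eval 1) ^ 2 *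
      rexp (-(t * ∫ s in (0:ℝ)..1, (x + σ * w.eval s) ^ 2)) ∂μ)) := by
    refine tendsto_integral_of_dominated_convergence (fun w => w.eval 1 ^ 2)
      (fun n => (hFmeas n).aestronglyMeasurable) hμ.integrable_eval_one_sq
      (fun n => ae_of_all _ fun w => ?_) (ae_of_all _ fun w => ?_)
    · rw [Real.norm_eq_abs, abs_of_nonneg (by positivity)]
      refine mul_le_of_le_one_right (by positivity) (exp_le_one_iff.2 ?_)
      have := hκ0 n
      rw [neg_nonpos]
      positivity
    · have hcont : Continuous (fun s => (x + σ * w.eval s) ^ 2) := by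
        have := w.continuous_eval
        fun_prop
      have h := (tendsto_mul_potential (2 * t)).mul (tendsto_trapezoid hcont)
      rw [mul_div_cancel_left₀ t two_ne_zero] at h
      have h' := ((continuous_exp.tendsto _).comp h.neg).const_mul (w.eval 1 ^ 2)
      refine h'.congr' ?_
      filter_upwards [eventually_gt_atTop 0] with n hn
      have hn' : (n : ℝ) ≠ 0 := by exact_mod_cast hn.ne'
      simp only [F, κ, θ, Function.comp]
      rw [← Finset.sum_div]
      congr 3
      field_simp
  -- `oscV` computes the expectation of `(σ w(1))²`, hence the division by `σ² = 2t`
  have hval : ∀ n : ℕ, n ≠ 0 → ∫ w, F n w ∂μ = oscV x (n * θ n) x / (2 * t) := by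
    intro n hn
    have hn' : (0 : ℝ) < n := by exact_mod_cast Nat.pos_of_ne_zero hn
    have hθ : 0 < θ n := arsinh_pos_iff.2 (by positivity)
    have h := hμ.lintegral_trapezoid hn hσ x hθ (by rw [hσ2]; exact sinh_arsinh _)
    have hV : 0 ≤ oscV x (n * θ n) x := by
      have h1 : 0 ≤ sinh (n * θ n) := sinh_nonneg_iff.2 (by positivity)
      have h2 := cosh_pos (n * θ n)
      unfold oscV
      positivity
    have h2 : ∫ w, 2 * t * F n w ∂μ = oscV x (n * θ n) x := by
      rw [integral_eq_lintegral_of_nonneg_ae (ae_of_all _ fun w => by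
        simp only [F, Pi.zero_apply]; positivity) ((hFmeas n).const_mul _).aestronglyMeasurable]
      rw [← ENNReal.toReal_ofReal hV, ← h]
      congr 1
      refine lintegral_congr fun w => ?_
      rw [mul_pow, hσ2]
      simp only [F, κ, mul_assoc]
    rw [integral_const_mul] at h2
    rw [← h2]
    field_simp
  have hosc : Continuous (fun T => oscV x T x / (2 * t)) := by
    have hc : ∀ T, cosh T ≠ 0 := fun T => (cosh_pos T).ne'
    have hc' : ∀ T, √(cosh T) ≠ 0 := fun T => (sqrt_pos.2 (cosh_pos T)).ne'
    unfold oscV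
    fun_prop (disch := assumption)
  have hlim' := (hosc.tendsto (2 * t)).comp (tendsto_mul_arsinh (2 * t))
  have heq := tendsto_nhds_unique hlim (hlim'.congr' (by
    filter_upwards [eventually_ne_atTop 0] with n hn
    exact (hval n hn).symm))
  rw [heq]
  have hc := (cosh_pos (2 * t)).ne'
  have hx : x / cosh (2 * t) - x = (1 - cosh (2 * t)) * x / cosh (2 * t) := by field_simp
  unfold oscV
  rw [hx]
  ring

end
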